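/- arXiv:1606.01654 — 3 statements merged into one kernel-verified Lean document; each statement's English description precedes it below -/
import Mathlib

section
/- Let (L, [-,-]) be a Lie algebra over a field K and d : L → L a K-linear map with d∘d = 0 which is a derivation of the bracket: d[x,y] = [dx,y] + [x,dy] for all x,y ∈ L. Then the derived bracket [x,y]_d := [dx, y] satisfies the left Leibniz identity [x,[y,z]_d]_d = [[x,y]_d, z]_d + [y,[x,z]_d]_d for all x,y,z ∈ L; that is, (L, [-,-]_d) is a left Leibniz algebra. -/
/-- The derived bracket `[x,y]_d = [dx,y]` of a differential Lie algebra
satisfies the left Leibniz identity. -/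
theorem derived_bracket_is_leibniz
    {K L : Type*} [Field K] [LieRing L] [LieAlgebra K L]
    (d : L →ₗ[K] L) (hd2 : ∀ x : L, d (d x) = 0)
    (hder : ∀ x y : L, d ⁅x, y⁆ = ⁅d x, y⁆ + ⁅x, d y⁆) :
    ∀ x y z : L, ⁅d x, ⁅d y, z⁆⁆ = ⁅d ⁅d x, y⁆, z⁆ + ⁅d y, ⁅d x, z⁆⁆ := by
  intro x y z
  -- Since `d² = 0`, `d ⁅d x, y⁆ = ⁅d x, d y⁆`; what remains is the Jacobi identity.
  rw [hder, hd2, zero_lie, zero_add]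
  exact leibniz_lie (d x) (d y) z
end

section
/- Let L be the three-dimensional Heisenberg Lie algebra over ℝ with basis {e₁, e₂, e₃} and bracket λ₀ determined by λ₀(e₁,e₃) = e₂, λ₀(e₃,e₁) = −e₂, and λ₀(e_i,e_j) = 0 for all other pairs of basis vectors. Let φ₁ : L × L → L be the bilinear map with φ₁(e₁,e₁) = e₂ and φ₁(e_i,e_j) = 0 for all other pairs of basis vectors. Then: (i) φ₁ is a Leibniz 2-cocycle of (L, λ₀) with coefficients in the adjoint representation, i.e. for all x,y,z ∈ L, λ₀(x,φ₁(y,z)) − λ₀(y,φ₁(x,z)) − λ₀(φ₁(x,y),z) − φ₁(λ₀(x,y),z) − φ₁(y,λ₀(x,z)) + φ₁(x,λ₀(y,z)) = 0; and (ii) φ₁ is not a Leibniz 2-coboundary: there is no linear map ψ : L → L with φ₁(x,y) = λ₀(ψ(x),y) + λ₀(x,ψ(y)) − ψ(λ₀(x,y)) for all x,y ∈ L. -/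
/-! Both maps take values in the line spanned by the central vector `e₁`:
`λ₀(x,y) = (x₀y₂ - x₂y₀) e₁` and `φ₁(x,y) = x₀y₀ e₁`. Each of them vanishes as soon as one
argument is a multiple of `e₁`, so every term of the cocycle identity is zero. For the second
part, evaluate a coboundary at `(e₀,e₀)`: since `λ₀` is skew-symmetric the result is zero,
whereas `φ₁(e₀,e₀) = e₁ ≠ 0`. -/

/-- A bilinear map on `ℝ³` is determined by its values on the standard basis. -/
lemma bilin_expand (B : (Fin 3 → ℝ) →ₗ[ℝ] (Fin 3 → ℝ) →ₗ[ℝ] (Fin 3 → ℝ)) (x y : Fin 3 → ℝ) :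
    B x y = ∑ i, ∑ j, (x i * y j) • B (Pi.single i 1) (Pi.single j 1) := by
  conv_lhs => rw [pi_eq_sum_univ' x, pi_eq_sum_univ' y]
  simp only [map_sum, map_smul, LinearMap.sum_apply, LinearMap.smul_apply, Finset.smul_sum,
    smul_smul]
  rw [Finset.sum_comm]
  simp only [mul_comm]

/-- On the 3-dimensional Heisenberg Lie algebra (with basis `e₀, e₁, e₂` and
`λ₀(e₀,e₂) = e₁ = −λ₀(e₂,e₀)`, all other basis brackets zero), the bilinear map
`φ₁` with `φ₁(e₀,e₀) = e₁` and all other basis values zero is a Leibniz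
2-cocycle with adjoint coefficients which is not a Leibniz 2-coboundary. -/
theorem heisenberg_phi1_cocycle_not_coboundary
    (lam φ : (Fin 3 → ℝ) →ₗ[ℝ] (Fin 3 → ℝ) →ₗ[ℝ] (Fin 3 → ℝ))
    (hlam13 : lam (Pi.single 0 1) (Pi.single 2 1) = Pi.single 1 1)
    (hlam31 : lam (Pi.single 2 1) (Pi.single 0 1) = - Pi.single 1 1)
    (hlam0 : ∀ i j : Fin 3, ¬(i = 0 ∧ j = 2) → ¬(i = 2 ∧ j = 0) →
      lam (Pi.single i 1) (Pi.single j 1) = 0)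
    (hφ : φ (Pi.single 0 1) (Pi.single 0 1) = Pi.single 1 1)
    (hφ0 : ∀ i j : Fin 3, ¬(i = 0 ∧ j = 0) →
      φ (Pi.single i 1) (Pi.single j 1) = 0) :
    (∀ x y z : Fin 3 → ℝ,
      lam x (φ y z) - lam y (φ x z) - lam (φ x y) z
        - φ (lam x y) z - φ y (lam x z) + φ x (lam y z) = 0)
    ∧ ¬ ∃ ψ : (Fin 3 → ℝ) →ₗ[ℝ] (Fin 3 → ℝ),
        ∀ x y : Fin 3 → ℝ,
          φ x y = lam (ψ x) y + lam x (ψ y) - ψ (lam x y) := by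
  have hl : ∀ x y, lam x y = (x 0 * y 2 - x 2 * y 0) • Pi.single 1 1 := by
    intro x y
    rw [bilin_expand]
    simp only [Fin.sum_univ_three, hlam13, hlam31, hlam0 0 0 (by decide) (by decide),
      hlam0 0 1 (by decide) (by decide), hlam0 1 0 (by decide) (by decide),
      hlam0 1 1 (by decide) (by decide), hlam0 1 2 (by decide) (by decide),
      hlam0 2 1 (by decide) (by decide), hlam0 2 2 (by decide) (by decide)]
    module
  have hp : ∀ x y, φ x y = (x 0 * y 0) • Pi.single 1 1 := by
    intro x y
    rw [bilin_expand]
    simp only [Fin.sum_univ_three, hφ, hφ0 0 1 (by decide), hφ0 0 2 (by decide),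
      hφ0 1 0 (by decide), hφ0 1 1 (by decide), hφ0 1 2 (by decide),
      hφ0 2 0 (by decide), hφ0 2 1 (by decide), hφ0 2 2 (by decide)]
    module
  refine ⟨fun x y z => ?_, ?_⟩
  · simp [hl, hp]
  · rintro ⟨ψ, h⟩
    have h1 := congrFun (h (Pi.single 0 1) (Pi.single 0 1)) 1
    simp [hl, hp] at h1
end

section
/- Let L be the three-dimensional Heisenberg Lie algebra over ℝ with basis {e₁, e₂, e₃} and bracket λ₀ determined by λ₀(e₁,e₃) = e₂, λ₀(e₃,e₁) = −e₂, and λ₀(e_i,e_j) = 0 for all other pairs of basis vectors. Let φ₂, φ₃ : L × L → L be the bilinear maps with φ₂(e₃,e₃) = e₂, φ₃(e₃,e₁) = e₂, and all other values on pairs of basis vectors equal to 0. Then each of φ₂ and φ₃ is a Leibniz 2-cocycle of (L, λ₀) with adjoint coefficients, i.e. λ₀(x,φ(y,z)) − λ₀(y,φ(x,z)) − λ₀(φ(x,y),z) − φ(λ₀(x,y),z) − φ(y,λ₀(x,z)) + φ(x,λ₀(y,z)) = 0 for all x,y,z ∈ L, and neither is a Leibniz 2-coboundary: for φ ∈ {φ₂,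 φ₃} there is no linear map ψ : L → L with φ(x,y) = λ₀(ψ(x),y) + λ₀(x,ψ(y)) − ψ(λ₀(x,y)) for all x,y ∈ L. -/
/-- A coboundary of a skew-symmetric bracket is skew-symmetric. -/
lemma coboundary_skew {lam φ : (Fin 3 → ℝ) →ₗ[ℝ] (Fin 3 → ℝ) →ₗ[ℝ] (Fin 3 → ℝ)}
    (hskew : ∀ x y, lam x y = -lam y x) {ψ : (Fin 3 → ℝ) →ₗ[ℝ] (Fin 3 → ℝ)}
    (h : ∀ x y, φ x y = lam (ψ x) y + lam x (ψ y) - ψ (lam x y)) (x y : Fin 3 → ℝ) :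
    φ x y + φ y x = 0 := by
  rw [h, h, hskew (ψ y) x, hskew y (ψ x), hskew y x, map_neg]
  abel

/-- On the 3-dimensional Heisenberg Lie algebra (with basis `e₀, e₁, e₂` and
`λ₀(e₀,e₂) = e₁ = −λ₀(e₂,e₀)`, all other basis brackets zero), the bilinear maps
`φ₂` with `φ₂(e₂,e₂) = e₁` and `φ₃` with `φ₃(e₂,e₀) = e₁` (all other basis
values zero) are Leibniz 2-cocycles with adjoint coefficients which are not
Leibniz 2-coboundaries. -/
theorem heisenberg_phi2_phi3_cocycles_not_coboundaries
    (lam φ₂ φ₃ : (Fin 3 → ℝ) →ₗ[ℝ] (Fin 3 → ℝ) →ₗ[ℝ] (Fin 3 → ℝ))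
    (hlam13 : lam (Pi.single 0 1) (Pi.single 2 1) = Pi.single 1 1)
    (hlam31 : lam (Pi.single 2 1) (Pi.single 0 1) = - Pi.single 1 1)
    (hlam0 : ∀ i j : Fin 3, ¬(i = 0 ∧ j = 2) → ¬(i = 2 ∧ j = 0) →
      lam (Pi.single i 1) (Pi.single j 1) = 0)
    (hφ₂ : φ₂ (Pi.single 2 1) (Pi.single 2 1) = Pi.single 1 1)
    (hφ₂0 : ∀ i j : Fin 3, ¬(i = 2 ∧ j = 2) →
      φ₂ (Pi.single i 1) (Pi.single j 1) = 0)
    (hφ₃ : φ₃ (Pi.single 2 1) (Pi.single 0 1) = Pi.single 1 1)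
    (hφ₃0 : ∀ i j : Fin 3, ¬(i = 2 ∧ j = 0) →
      φ₃ (Pi.single i 1) (Pi.single j 1) = 0) :
    (∀ x y z : Fin 3 → ℝ,
      lam x (φ₂ y z) - lam y (φ₂ x z) - lam (φ₂ x y) z
        - φ₂ (lam x y) z - φ₂ y (lam x z) + φ₂ x (lam y z) = 0)
    ∧ (∀ x y z : Fin 3 → ℝ,
      lam x (φ₃ y z) - lam y (φ₃ x z) - lam (φ₃ x y) z
        - φ₃ (lam x y) z - φ₃ y (lam x z) + φ₃ x (lam y z) = 0)
    ∧ (¬ ∃ ψ : (Fin 3 → ℝ) →ₗ[ℝ] (Fin 3 → ℝ),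
        ∀ x y : Fin 3 → ℝ,
          φ₂ x y = lam (ψ x) y + lam x (ψ y) - ψ (lam x y))
    ∧ (¬ ∃ ψ : (Fin 3 → ℝ) →ₗ[ℝ] (Fin 3 → ℝ),
        ∀ x y : Fin 3 → ℝ,
          φ₃ x y = lam (ψ x) y + lam x (ψ y) - ψ (lam x y)) := by
  have hlam : ∀ x y, lam x y = Pi.single 1 (x 0 * y 2 - x 2 * y 0) := by
    intro x y
    rw [bilin_expand]
    simp only [Fin.sum_univ_three, hlam13, hlam31]
    rw [hlam0 0 0, hlam0 0 1, hlam0 1 0, hlam0 1 1, hlam0 1 2, hlam0 2 1, hlam0 2 2] <;>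
      try decide
    ext k; fin_cases k <;> simp
    ring
  have h2 : ∀ x y, φ₂ x y = Pi.single 1 (x 2 * y 2) := by
    intro x y
    rw [bilin_expand]
    simp only [Fin.sum_univ_three, hφ₂]
    rw [hφ₂0 0 0, hφ₂0 0 1, hφ₂0 0 2, hφ₂0 1 0, hφ₂0 1 1, hφ₂0 1 2, hφ₂0 2 0, hφ₂0 2 1] <;>
      try decide
    ext k; fin_cases k <;> simp
  have h3 : ∀ x y, φ₃ x y = Pi.single 1 (x 2 * y 0) := by
    intro x y
    rw [bilin_expand]
    simp only [Fin.sum_univ_three, hφ₃]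
    rw [hφ₃0 0 0, hφ₃0 0 1, hφ₃0 0 2, hφ₃0 1 0, hφ₃0 1 1, hφ₃0 1 2, hφ₃0 2 1, hφ₃0 2 2] <;>
      try decide
    ext k; fin_cases k <;> simp
  have hskew : ∀ x y, lam x y = -lam y x := by
    intro x y
    rw [hlam, hlam, ← Pi.single_neg]
    congr 1; ring
  refine ⟨fun x y z => ?_, fun x y z => ?_, ?_, ?_⟩
  · simp [hlam, h2]
  · simp [hlam, h3]
  · rintro ⟨ψ, h⟩
    have := congrFun (coboundary_skew hskew h (Pi.single 2 1) (Pi.single 2 1)) 1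
    simp [h2] at this
  · rintro ⟨ψ, h⟩
    have := congrFun (coboundary_skew hskew h (Pi.single 2 1) (Pi.single 0 1)) 1
    simp [h3] at this
end
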